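/- Let τ₁₁, τ₂₂ be complex numbers with Im τ₁₁ > 0 and Im τ₂₂ > 0, let τ = ((τ₁₁, 1/4), (1/4, τ₂₂)), and set X = ϑ₃(0|4τ₁₁)·ϑ₃(0|4τ₂₂), Y = ϑ₂(0|4τ₁₁)·ϑ₄(0|4τ₂₂), Z = ϑ₄(0|4τ₁₁)·ϑ₂(0|4τ₂₂). Then the genus-2 theta constants θ[ε] = θ[ε](0|τ) satisfy θ[00;00] = X + Y + Z, θ[00;01] = X + Y − Z, θ[00;10] = X − Y + Z, and θ[00;11] = X − Y − Z. (These are the theta constants of the 4-sheeted covering over a torus, τ₁₂ = 1/4.) -/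

import Mathlib

/-- Genus-2 Riemann theta function with characteristic `[a b; c d]`
(`(a,b) = ε'`, `(c,d) = ε''`), evaluated at `z = (z1, z2)` and period matrix
`τ = ((t11, t12), (t12, t22))`. -/
noncomputable def theta2 (a b c d : ℝ) (z1 z2 t11 t12 t22 : ℂ) : ℂ :=
  ∑' m : ℤ × ℤ,
    Complex.exp
      ((Real.pi : ℂ) * Complex.I *
          (((m.1 : ℂ) + (a : ℂ) / 2) *
              (((m.1 : ℂ) + (a : ℂ) / 2) * t11 + ((m.2 : ℂ) + (b : ℂ) / 2) * t12) +
            ((m.2 : ℂ) + (b : ℂ) / 2) *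
              (((m.1 : ℂ) + (a : ℂ) / 2) * t12 + ((m.2 : ℂ) + (b : ℂ) / 2) * t22)) +
        2 * (Real.pi : ℂ) * Complex.I *
          (((m.1 : ℂ) + (a : ℂ) / 2) * (z1 + (c : ℂ) / 2) +
            ((m.2 : ℂ) + (b : ℂ) / 2) * (z2 + (d : ℂ) / 2)))

/-- The symmetric matrix `τ = ((t11, t12), (t12, t22))` has positive definite
imaginary part. -/
def posDefIm (t11 t12 t22 : ℂ) : Prop :=
  (!![t11.im, t12.im; t12.im, t22.im]).PosDef

/-- Jacobi theta constant `ϑ₂(0|σ)`. -/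
noncomputable def jtheta2 (σ : ℂ) : ℂ :=
  ∑' n : ℤ, Complex.exp ((Real.pi : ℂ) * Complex.I * ((n : ℂ) + 1 / 2) ^ 2 * σ)

/-- Jacobi theta constant `ϑ₃(0|σ)`. -/
noncomputable def jtheta3 (σ : ℂ) : ℂ :=
  ∑' n : ℤ, Complex.exp ((Real.pi : ℂ) * Complex.I * (n : ℂ) ^ 2 * σ)

/-- Jacobi theta constant `ϑ₄(0|σ)`. -/
noncomputable def jtheta4 (σ : ℂ) : ℂ :=
  ∑' n : ℤ, (-1 : ℂ) ^ (n : ℤ) * Complex.exp ((Real.pi : ℂ) * Complex.I * (n : ℂ) ^ 2 * σ)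

/-!
Sum the genus-2 theta series over the cosets `(r, s)` of `kℤ × kℤ` in `ℤ × ℤ`. When
`τ₁₂ = j / k²`, on each coset the cross term `2πi τ₁₂ m n` of the exponent is, modulo `2πi`, the sum
of a part linear in `m`, a part linear in `n` and a constant, so the coset contributes a product of
two genus-1 theta functions with periods `k² τ₁₁` and `k² τ₂₂`. For `τ₁₂ = 1/4` one takes `k = 2`:
the cosets `(0, 0)`, `(1, 0)`, `(0, 1)` give `X`, `Y`, `Z` up to sign, and the coset `(1, 1)` gives
a multiple of `ϑ₁(0|4τ₁₁) ϑ₁(0|4τ₂₂) = 0`.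
-/

open Complex

open scoped Real

section Cosets

variable {M : Type*} [AddCommMonoid M] [TopologicalSpace M] [ContinuousAdd M]

lemma hasSum_prod_of_fintype {ι β : Type*} [Fintype ι] {f : ι × β → M} {g : ι → M}
    (hf : ∀ i, HasSum (fun x ↦ f (i, x)) (g i)) : HasSum f (∑ i, g i) := by
  classical
  have fiber_hasSum (i : ι) : HasSum (fun y : ι × β ↦ if i = y.1 then f y else 0) (g i) := by
    refine ((Prod.mk_right_injective i).hasSum_iff ?_).mp (by simpa [Function.comp_def] using hf i)
    rintro ⟨i', x⟩ hx
    exact if_neg fun (h : i = i') ↦ hx ⟨x, by rw [h]⟩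
  simpa using hasSum_sum (s := Finset.univ) fun i _ ↦ fiber_hasSum i

lemma hasSum_int_prod_of_residues (k : ℕ) [NeZero k] {f : ℤ × ℤ → M} {g : Fin k → Fin k → M}
    (hf : ∀ r s : Fin k, HasSum (fun x : ℤ × ℤ ↦ f (x.1 * k + r, x.2 * k + s)) (g r s)) :
    HasSum f (∑ r, ∑ s, g r s) := by
  let e : (Fin k × Fin k) × (ℤ × ℤ) ≃ ℤ × ℤ :=
    (Equiv.prodComm _ _).trans <| (Equiv.prodProdProdComm _ _ _ _).trans <|
      (Int.divModEquiv k).symm.prodCongr (Int.divModEquiv k).symm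
  rw [← e.hasSum_iff, ← Fintype.sum_prod_type']
  exact hasSum_prod_of_fintype fun rs ↦ hf rs.1 rs.2

end Cosets

/-- The `n`-th term of the series `thetaChar a b z σ`. -/
noncomputable def thetaCharTerm (a b : ℝ) (z σ : ℂ) (n : ℤ) : ℂ :=
  cexp (π * I * (n + a / 2) ^ 2 * σ + 2 * π * I * (n + a / 2) * (z + b / 2))

/-- The genus-1 theta function with characteristic `[a; b]`, normalised like `theta2`. -/
noncomputable def thetaChar (a b : ℝ) (z σ : ℂ) : ℂ :=
  ∑' n : ℤ, thetaCharTerm a b z σ n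

section ThetaChar

variable (a b : ℝ) (z : ℂ) {σ : ℂ}

lemma summable_thetaCharTerm (hσ : 0 < σ.im) : Summable (thetaCharTerm a b z σ) := by
  refine (((summable_jacobiTheta₂_term_iff (z + b / 2 + a / 2 * σ) σ).mpr hσ).mul_left
    (cexp (π * I * (a / 2) ^ 2 * σ + 2 * π * I * (a / 2) * (z + b / 2)))).congr fun n ↦ ?_
  rw [jacobiTheta₂_term, thetaCharTerm, ← Complex.exp_add]
  ring_nf

lemma hasSum_thetaCharTerm_mul (a' b' : ℝ) (z' : ℂ) {σ' : ℂ} (hσ : 0 < σ.im) (hσ' : 0 < σ'.im) :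
    HasSum (fun x : ℤ × ℤ ↦ thetaCharTerm a b z σ x.1 * thetaCharTerm a' b' z' σ' x.2)
      (thetaChar a b z σ * thetaChar a' b' z' σ') :=
  have h := summable_thetaCharTerm a b z hσ
  have h' := summable_thetaCharTerm a' b' z' hσ'
  h.hasSum.mul h'.hasSum (summable_mul_of_summable_norm h.norm h'.norm)

variable (σ)

lemma thetaChar_neg : thetaChar (-a) (-b) (-z) σ = thetaChar a b z σ := by
  rw [thetaChar, ← (Equiv.neg ℤ).tsum_eq]
  refine tsum_congr fun n ↦ congrArg cexp ?_
  push_cast [Equiv.neg_apply]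
  ring

lemma thetaChar_add_two_left : thetaChar (a + 2) b z σ = thetaChar a b z σ := by
  rw [thetaChar, thetaChar, ← (Equiv.addRight (1 : ℤ)).tsum_eq (thetaCharTerm a b z σ)]
  refine tsum_congr fun n ↦ congrArg cexp ?_
  push_cast [Equiv.coe_addRight]
  ring

lemma thetaChar_add_two_mul_right (c : ℤ) :
    thetaChar a (b + 2 * c) z σ = cexp (π * I * a * c) * thetaChar a b z σ := by
  rw [thetaChar, thetaChar, ← tsum_mul_left]
  refine tsum_congr fun n ↦ ?_
  rw [thetaCharTerm, thetaCharTerm, ← Complex.exp_add, Complex.exp_eq_exp_iff_exists_int]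
  refine ⟨n * c, ?_⟩
  push_cast
  ring

lemma thetaChar_one_one_zero : thetaChar 1 1 0 σ = 0 := by
  rw [← self_eq_neg]
  calc thetaChar 1 1 0 σ = thetaChar (-1) (-1) 0 σ := by simpa using (thetaChar_neg 1 1 0 σ).symm
    _ = thetaChar 1 (-1) 0 σ := by
      rw [← thetaChar_add_two_left]
      norm_num
    _ = thetaChar 1 (1 + 2 * (-1 : ℤ)) 0 σ := by norm_num
    _ = -thetaChar 1 1 0 σ := by
      rw [thetaChar_add_two_mul_right]
      simp [Complex.exp_neg]

end ThetaChar

lemma cexp_pi_mul_I_mul_int (n : ℤ) : cexp (π * I * n) = (-1) ^ n := by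
  rw [mul_comm, Complex.exp_int_mul, Complex.exp_pi_mul_I]

lemma jtheta2_eq_thetaChar (σ : ℂ) : jtheta2 σ = thetaChar 1 0 0 σ := by
  simp [jtheta2, thetaChar, thetaCharTerm]

lemma jtheta3_eq_thetaChar (σ : ℂ) : jtheta3 σ = thetaChar 0 0 0 σ := by
  simp [jtheta3, thetaChar, thetaCharTerm]

lemma jtheta4_eq_thetaChar (σ : ℂ) : jtheta4 σ = thetaChar 0 1 0 σ := by
  refine tsum_congr fun n ↦ ?_
  rw [thetaCharTerm, ← cexp_pi_mul_I_mul_int, ← Complex.exp_add]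
  push_cast
  ring_nf

/-- The term of index `m` of the series `theta2 a b c d z1 z2 t11 t12 t22`. -/
noncomputable def theta2Term (a b c d : ℝ) (z1 z2 t11 t12 t22 : ℂ) (m : ℤ × ℤ) : ℂ :=
  cexp (π * I *
      ((m.1 + a / 2) * ((m.1 + a / 2) * t11 + (m.2 + b / 2) * t12) +
        (m.2 + b / 2) * ((m.1 + a / 2) * t12 + (m.2 + b / 2) * t22)) +
    2 * π * I * ((m.1 + a / 2) * (z1 + c / 2) + (m.2 + b / 2) * (z2 + d / 2)))

section Rational

variable (j : ℤ) (k : ℕ) [NeZero k] (a b c d : ℝ) (z1 z2 : ℂ)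

-- With `m₁ + a / 2 = k P`, `m₂ + b / 2 = k Q`, `P = p + α / 2`, `Q = q + β / 2`, the cross term
-- `2 (j / k²) (m₁ + a / 2) (m₂ + b / 2) = 2 j P Q` is `j (P β + Q α - α β / 2)` modulo `2`.
lemma theta2Term_rational_coset (t u : ℂ) {r s : ℕ} {α β : ℝ} (hα : k * α = 2 * r + a)
    (hβ : k * β = 2 * s + b) (p q : ℤ) :
    theta2Term a b c d z1 z2 t (j / k ^ 2) u (p * k + r, q * k + s) =
      cexp (-(π * I * j * α * β / 2)) *
        (thetaCharTerm α (j * β + k * c) (k * z1) (k ^ 2 * t) p *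
          thetaCharTerm β (j * α + k * d) (k * z2) (k ^ 2 * u) q) := by
  have hk : (k : ℂ) ≠ 0 := NeZero.ne _
  obtain rfl : a = k * α - 2 * r := by linarith
  obtain rfl : b = k * β - 2 * s := by linarith
  rw [theta2Term, thetaCharTerm, thetaCharTerm, ← Complex.exp_add, ← Complex.exp_add,
    Complex.exp_eq_exp_iff_exists_int]
  refine ⟨j * p * q, ?_⟩
  push_cast
  field_simp
  ring

theorem theta2_rational_eq_sum_thetaChar {t u : ℂ} (ht : 0 < t.im) (hu : 0 < u.im) :
    theta2 a b c d z1 z2 t (j / k ^ 2) u = ∑ r : Fin k, ∑ s : Fin k,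
      let α : ℝ := (2 * (r : ℕ) + a) / k
      let β : ℝ := (2 * (s : ℕ) + b) / k
      cexp (-(π * I * j * α * β / 2)) *
        (thetaChar α (j * β + k * c) (k * z1) (k ^ 2 * t) *
          thetaChar β (j * α + k * d) (k * z2) (k ^ 2 * u)) := by
  have hk : (k : ℝ) ≠ 0 := NeZero.ne _
  have im_pos {σ : ℂ} (hσ : 0 < σ.im) : 0 < ((k : ℂ) ^ 2 * σ).im := by
    have : 0 < k := NeZero.pos k
    rw [← Nat.cast_pow, ← nsmul_eq_mul, Complex.im_nsmul]
    positivity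
  refine HasSum.tsum_eq (f := theta2Term a b c d z1 z2 t (j / k ^ 2) u) <|
    hasSum_int_prod_of_residues k fun r s ↦ ?_
  refine ((hasSum_thetaCharTerm_mul _ _ _ _ _ _ (im_pos ht) (im_pos hu)).mul_left _).congr_fun ?_
  exact fun x ↦ theta2Term_rational_coset j k a b c d z1 z2 t u (mul_div_cancel₀ _ hk)
    (mul_div_cancel₀ _ hk) x.1 x.2

end Rational

lemma theta2_quarter_int_char (c d : ℤ) {t u : ℂ} (ht : 0 < t.im) (hu : 0 < u.im) :
    theta2 0 0 c d 0 0 t (1 / 4) u =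
      jtheta3 (4 * t) * jtheta3 (4 * u) + (-1) ^ c * (jtheta2 (4 * t) * jtheta4 (4 * u)) +
        (-1) ^ d * (jtheta4 (4 * t) * jtheta2 (4 * u)) := by
  have coset_sum : theta2 0 0 c d 0 0 t (1 / 4) u =
      thetaChar 0 (0 + 2 * c) 0 (4 * t) * thetaChar 0 (0 + 2 * d) 0 (4 * u) +
        thetaChar 0 (1 + 2 * c) 0 (4 * t) * thetaChar 1 (0 + 2 * d) 0 (4 * u) +
        (thetaChar 1 (0 + 2 * c) 0 (4 * t) * thetaChar 0 (1 + 2 * d) 0 (4 * u) +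
          cexp (-(π * I / 2)) *
            (thetaChar 1 (1 + 2 * c) 0 (4 * t) * thetaChar 1 (1 + 2 * d) 0 (4 * u))) := by
    have h := theta2_rational_eq_sum_thetaChar 1 2 0 0 c d 0 0 ht hu
    norm_num [Fin.sum_univ_two] at h ⊢
    exact h
  have even_shift (b : ℝ) (n : ℤ) (σ : ℂ) : thetaChar 0 (b + 2 * n) 0 σ = thetaChar 0 b 0 σ := by
    simp [thetaChar_add_two_mul_right]
  have odd_shift (b : ℝ) (n : ℤ) (σ : ℂ) :
      thetaChar 1 (b + 2 * n) 0 σ = (-1) ^ n * thetaChar 1 b 0 σ := by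
    simp [thetaChar_add_two_mul_right, cexp_pi_mul_I_mul_int]
  rw [coset_sum]
  simp only [even_shift, odd_shift, thetaChar_one_one_zero, jtheta2_eq_thetaChar,
    jtheta3_eq_thetaChar, jtheta4_eq_thetaChar]
  ring

/-- **Theta constants of the 4-sheeted covering over a torus (`τ₁₂ = 1/4`).**
With `X = ϑ₃(0|4τ₁₁)ϑ₃(0|4τ₂₂)`, `Y = ϑ₂(0|4τ₁₁)ϑ₄(0|4τ₂₂)`,
`Z = ϑ₄(0|4τ₁₁)ϑ₂(0|4τ₂₂)`, and `θ[ε] = θ[ε](0|τ)` for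
`τ = ((τ₁₁, 1/4), (1/4, τ₂₂))`:
`θ[00;00] = X+Y+Z`, `θ[00;01] = X+Y−Z`, `θ[00;10] = X−Y+Z`, `θ[00;11] = X−Y−Z`. -/
theorem theta_constants_four_sheeted (τ11 τ22 : ℂ) (h1 : 0 < τ11.im) (h2 : 0 < τ22.im) :
    theta2 0 0 0 0 0 0 τ11 (1/4) τ22 =
        jtheta3 (4*τ11) * jtheta3 (4*τ22) + jtheta2 (4*τ11) * jtheta4 (4*τ22)
          + jtheta4 (4*τ11) * jtheta2 (4*τ22) ∧
      theta2 0 0 0 1 0 0 τ11 (1/4) τ22 =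
        jtheta3 (4*τ11) * jtheta3 (4*τ22) + jtheta2 (4*τ11) * jtheta4 (4*τ22)
          - jtheta4 (4*τ11) * jtheta2 (4*τ22) ∧
      theta2 0 0 1 0 0 0 τ11 (1/4) τ22 =
        jtheta3 (4*τ11) * jtheta3 (4*τ22) - jtheta2 (4*τ11) * jtheta4 (4*τ22)
          + jtheta4 (4*τ11) * jtheta2 (4*τ22) ∧
      theta2 0 0 1 1 0 0 τ11 (1/4) τ22 =
        jtheta3 (4*τ11) * jtheta3 (4*τ22) - jtheta2 (4*τ11) * jtheta4 (4*τ22)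
          - jtheta4 (4*τ11) * jtheta2 (4*τ22) := by
  refine ⟨?_, ?_, ?_, ?_⟩
  · simpa using theta2_quarter_int_char 0 0 h1 h2
  · simpa [sub_eq_add_neg] using theta2_quarter_int_char 0 1 h1 h2
  · simpa [sub_eq_add_neg] using theta2_quarter_int_char 1 0 h1 h2
  · simpa [sub_eq_add_neg] using theta2_quarter_int_char 1 1 h1 h2
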